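/- Entrance law for the interlaced kernel: let n ≥ 1 and define, for t > 0 and (x,y) ∈ W^{n+1,n}, ν^n_t(x,y) = (n!/Z_{n+1}) t^{−(n+1)²/2} exp(−Σ_i x_i²/(2t)) h_{n+1}(x) h_n(y). Then for all s, t > 0 and all (x',y') ∈ W^{n+1,n}, ∫_{W^{n+1,n}} (n!/Z_{n+1}) s^{−(n+1)²/2} exp(−Σ_i x_i²/(2s)) h_{n+1}(x) h_n(y') q^n_t((x,y),(x',y')) dx dy = ν^n_{t+s}(x',y'); equivalently, ∫_{W^{n+1,n}} ν^n_s(w) q^{n,+}_t(w,w') dw = ν^n_{t+s}(w'), where q^{n,+}_t((x,y),(x',y')) = (h_n(y')/h_n(y)) q^n_t((x,y),(x',y')). -/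

import Mathlib

open MeasureTheory Real

/-- The centered Gaussian density with variance `t`. -/
noncomputable def gauss (t y : ℝ) : ℝ :=
  (Real.sqrt (2 * Real.pi * t))⁻¹ * Real.exp (-y ^ 2 / (2 * t))

/-- The Gaussian cumulative distribution function `Φ_t`. -/
noncomputable def gaussCDF (t y : ℝ) : ℝ := ∫ z in Set.Iic y, gauss t z

/-- The derivative `φ'_t` of the Gaussian density. -/
noncomputable def gaussDeriv (t y : ℝ) : ℝ :=
  -y / Real.sqrt (2 * Real.pi * t ^ 3) * Real.exp (-y ^ 2 / (2 * t))

/-- The kernel `q^n_t((x,y),(x',y'))`, a `(2n+1)×(2n+1)` block determinant. -/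
noncomputable def qKer (n : ℕ) (t : ℝ) (x x' : Fin (n + 1) → ℝ) (y y' : Fin n → ℝ) : ℝ :=
  Matrix.det (Matrix.fromBlocks
    (Matrix.of fun i j : Fin (n + 1) => gauss t (x' j - x i))
    (Matrix.of fun (i : Fin (n + 1)) (j : Fin n) =>
      gaussCDF t (y' j - x i) - (if (i : ℕ) ≤ (j : ℕ) then (1 : ℝ) else 0))
    (Matrix.of fun (i : Fin n) (j : Fin (n + 1)) => gaussDeriv t (x' j - y i))
    (Matrix.of fun i j : Fin n => gauss t (y' j - y i)))

/-- The Vandermonde product `h_m(z) = ∏_{i<j} (z_j − z_i)`. -/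
noncomputable def vand (m : ℕ) (z : Fin m → ℝ) : ℝ :=
  ∏ j : Fin m, ∏ i ∈ Finset.Iio j, (z j - z i)

/-- The normalising constant `Z_m = (2π)^{m/2} ∏_{j=1}^{m−1} j!`. -/
noncomputable def Zconst (m : ℕ) : ℝ :=
  (2 * Real.pi) ^ ((m : ℝ) / 2) * ∏ j ∈ Finset.range m, (Nat.factorial j : ℝ)

/-- The interlacing region `W^{n+1,n}`. -/
def Wint (n : ℕ) : Set ((Fin (n + 1) → ℝ) × (Fin n → ℝ)) :=
  {w | ∀ i : Fin n, w.1 i.castSucc ≤ w.2 i ∧ w.2 i ≤ w.1 i.succ}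

/-- The entrance law density `ν^n_t(x,y)`. -/
noncomputable def nuLaw (n : ℕ) (t : ℝ) (x : Fin (n + 1) → ℝ) (y : Fin n → ℝ) : ℝ :=
  ((Nat.factorial n : ℝ) / Zconst (n + 1)) * t ^ (-(((n : ℝ) + 1) ^ 2) / 2)
    * Real.exp (-(∑ i, (x i) ^ 2) / (2 * t)) * vand (n + 1) x * vand n y

/-! For fixed monotone `x`, the fibre of `Wint n` over `x` is a box, so the integral over `y` may be
taken row by row in the lower blocks of `qKer`. Those rows become differences of consecutive rows
of the upper blocks, up to an identity block, and row operations leave the Karlin–McGregor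
determinant `det (gauss t (x'_j - x_i))`. As `vand` is a determinant too, Andréief's identity turns
the remaining integral over the Weyl chamber `{x | Monotone x}` into a determinant of integrals
`∫ gauss s z * z ^ j * gauss t (x'_i - z)`. Completing the square, each of them is
`gauss (t + s) x'_i` times the `j`-th moment of a Gaussian with mean `s / (t + s) * x'_i`, which is
a monic polynomial of degree `j` in the mean, so the determinant is again a Vandermonde product.
-/

section MultilinearFubini

lemma multilinearMap_pi_apply_eq_sum {R κ J M : Type*} [CommSemiring R] [Fintype κ]
    [DecidableEq κ] [Fintype J] [DecidableEq J] [AddCommMonoid M] [Module R M]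
    (L : MultilinearMap R (fun _ : κ => J → R) M) (v : κ → J → R) :
    L v = ∑ r : κ → J, (∏ i, v i (r i)) • L fun i => Pi.single (r i) 1 := by
  have hv : v = fun i => ∑ j, v i j • Pi.single j (1 : R) := funext fun i => by
    simp only [← Pi.single_smul, smul_eq_mul, mul_one, Finset.univ_sum_single]
  conv_lhs => rw [hv]
  simp_rw [L.map_sum, L.map_smul_univ]

variable {𝕜 κ J F : Type*} [RCLike 𝕜] [Fintype κ] [Finite J]
  [NormedAddCommGroup F] [NormedSpace 𝕜 F]
  {X : κ → Type*} [∀ i, MeasurableSpace (X i)] {μ : ∀ i, Measure (X i)} [∀ i, SigmaFinite (μ i)]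
  (L : MultilinearMap 𝕜 (fun _ : κ => J → 𝕜) F) {f : ∀ i, J → X i → 𝕜}

lemma integrable_multilinearMap_pi (hf : ∀ i j, Integrable (f i j) (μ i)) :
    Integrable (fun x => L fun i j => f i j (x i)) (Measure.pi μ) := by
  classical
  cases nonempty_fintype J
  simp only [fun x : ∀ i, X i => multilinearMap_pi_apply_eq_sum L fun i j => f i j (x i)]
  exact integrable_finsetSum _ fun r _ =>
    (Integrable.fintype_prod_dep fun i => hf i (r i)).smul_const _

lemma integral_multilinearMap_pi [NormedSpace ℝ F] [CompleteSpace F]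
    (hf : ∀ i j, Integrable (f i j) (μ i)) :
    ∫ x, L (fun i j => f i j (x i)) ∂Measure.pi μ = L fun i j => ∫ z, f i j z ∂μ i := by
  classical
  cases nonempty_fintype J
  simp only [fun x : ∀ i, X i => multilinearMap_pi_apply_eq_sum L fun i j => f i j (x i)]
  rw [integral_finsetSum _ fun r _ =>
    (Integrable.fintype_prod_dep fun i => hf i (r i)).smul_const _,
    multilinearMap_pi_apply_eq_sum L]
  refine Finset.sum_congr rfl fun r _ => ?_
  rw [integral_smul_const, integral_fintype_prod_eq_prod fun i => f i (r i)]

end MultilinearFubini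

section IntegralDet

variable {𝕜 ι κ : Type*} [RCLike 𝕜] [Fintype ι] [DecidableEq ι] [Fintype κ] [DecidableEq κ]

lemma integrable_det {X : ι → Type*} [∀ i, MeasurableSpace (X i)] {μ : ∀ i, Measure (X i)}
    [∀ i, SigmaFinite (μ i)] {f : ∀ i, ι → X i → 𝕜} (hf : ∀ i j, Integrable (f i j) (μ i)) :
    Integrable (fun x => (Matrix.of fun i j => f i j (x i)).det) (Measure.pi μ) :=
  integrable_multilinearMap_pi Matrix.detRowAlternating.toMultilinearMap hf

lemma integral_det {X : ι → Type*} [∀ i, MeasurableSpace (X i)] {μ : ∀ i, Measure (X i)}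
    [∀ i, SigmaFinite (μ i)] {f : ∀ i, ι → X i → 𝕜} (hf : ∀ i j, Integrable (f i j) (μ i)) :
    ∫ x, (Matrix.of fun i j => f i j (x i)).det ∂Measure.pi μ =
      (Matrix.of fun i j => ∫ z, f i j z ∂μ i).det :=
  integral_multilinearMap_pi Matrix.detRowAlternating.toMultilinearMap hf

lemma integral_det_fromBlocks {X : κ → Type*} [∀ i, MeasurableSpace (X i)]
    {μ : ∀ i, Measure (X i)} [∀ i, SigmaFinite (μ i)]
    (A : Matrix ι ι 𝕜) (B : Matrix ι κ 𝕜) {c : ∀ i, ι → X i → 𝕜} {d : ∀ i, κ → X i → 𝕜}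
    (hc : ∀ i j, Integrable (c i j) (μ i)) (hd : ∀ i j, Integrable (d i j) (μ i)) :
    ∫ y, (Matrix.fromBlocks A B (Matrix.of fun i j => c i j (y i))
        (Matrix.of fun i j => d i j (y i))).det ∂Measure.pi μ =
      (Matrix.fromBlocks A B (Matrix.of fun i j => ∫ z, c i j z ∂μ i)
        (Matrix.of fun i j => ∫ z, d i j z ∂μ i)).det := by
  let detBelow := Matrix.detRowAlternating.toMultilinearMap.currySum fun i => Sum.elim (A i) (B i)
  have detBelow_apply (r : κ → ι ⊕ κ → 𝕜) :
      detBelow r = (Matrix.fromBlocks A B (Matrix.of fun i j => r i (Sum.inl j))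
        (Matrix.of fun i j => r i (Sum.inr j))).det :=
    congrArg Matrix.det (by ext (i | i) (j | j) <;> rfl)
  have h := integral_multilinearMap_pi (μ := μ) (f := fun i => Sum.elim (c i) (d i)) detBelow
    fun i => Sum.rec (hc i) (hd i)
  simpa only [detBelow_apply, Sum.elim_inl, Sum.elim_inr] using h

end IntegralDet

section RowOperation

variable {R ι κ : Type*} [CommRing R] [Fintype ι] [DecidableEq ι] [Fintype κ] [DecidableEq κ]

lemma det_fromBlocks_mul_mul_add (A : Matrix ι ι R) (B : Matrix ι κ R) (L : Matrix κ ι R)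
    (D : Matrix κ κ R) :
    (Matrix.fromBlocks A B (L * A) (L * B + D)).det = A.det * D.det := by
  have h : Matrix.fromBlocks A B (L * A) (L * B + D) =
      Matrix.fromBlocks 1 0 L 1 * Matrix.fromBlocks A B 0 D := by
    simp [Matrix.fromBlocks_multiply]
  simp [h]

/-- The `n × (n + 1)` matrix of `(a_i) ↦ (a_i - a_{i+1})`, through which the lower rows of `qKer`
are expressed by the upper ones after integration. -/
def consecutiveDiff (R : Type*) [Ring R] (n : ℕ) : Matrix (Fin n) (Fin (n + 1)) R :=
  (1 : Matrix (Fin (n + 1)) (Fin (n + 1)) R).submatrix Fin.castSucc id -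
    (1 : Matrix (Fin (n + 1)) (Fin (n + 1)) R).submatrix Fin.succ id

lemma consecutiveDiff_mul_apply {R κ : Type*} [Ring R] {n : ℕ} (M : Matrix (Fin (n + 1)) κ R)
    (i : Fin n) (j : κ) :
    (consecutiveDiff R n * M) i j = M i.castSucc j - M i.succ j := by
  simp [consecutiveDiff, Matrix.mul_apply, Matrix.one_apply, sub_mul, Finset.sum_sub_distrib]

end RowOperation

section WeylChamber

instance {ι α : Type*} [MeasurableSpace α] :
    MeasurableConstSMul (Equiv.Perm ι)ᵈᵐᵃ (ι → α) where
  measurable_const_smul _ := measurable_pi_lambda _ fun _ => measurable_pi_apply _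

instance {ι α : Type*} [Fintype ι] [MeasureSpace α] [SigmaFinite (volume : Measure α)] :
    SMulInvariantMeasure (Equiv.Perm ι)ᵈᵐᵃ (ι → α) volume where
  measure_preimage_smul g s hs := by
    have h := volume_measurePreserving_piCongrLeft (fun _ => α) (DomMulAct.mk.symm g).symm
    have hg : ⇑(MeasurableEquiv.piCongrLeft (fun _ => α) (DomMulAct.mk.symm g).symm) = (g • ·) := by
      funext x i
      rw [MeasurableEquiv.coe_piCongrLeft, Equiv.piCongrLeft_apply, eq_rec_constant,
        Equiv.symm_symm, DomMulAct.smul_apply]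
      rfl
    rw [← h.measure_preimage hs.nullMeasurableSet, hg]

lemma ae_injective_pi (ι : Type*) [Fintype ι] :
    ∀ᵐ x : ι → ℝ, Function.Injective x := by
  have hdiag (i j : ι) (hij : i ≠ j) : ∀ᵐ x : ι → ℝ, x i ≠ x j := by
    classical
    let H : Submodule ℝ (ι → ℝ) := LinearMap.eqLocus (LinearMap.proj i) (LinearMap.proj j)
    have hH : H ≠ ⊤ := fun hH => by
      have hsingle : Pi.single i (1 : ℝ) ∈ H := hH ▸ Submodule.mem_top
      simp [H, hij] at hsingle
    exact compl_mem_ae_iff.2 (Measure.addHaar_submodule volume H hH)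
  have hall : ∀ᵐ x : ι → ℝ, ∀ i j, i ≠ j → x i ≠ x j :=
    ae_all_iff.2 fun i => ae_all_iff.2 fun j => Filter.eventually_imp_distrib_left.2 (hdiag i j)
  exact hall.mono fun x hx i j => not_imp_not.1 (hx i j)

lemma isFundamentalDomain_setOf_monotone (m : ℕ) :
    IsFundamentalDomain (Equiv.Perm (Fin m))ᵈᵐᵃ {x : Fin m → ℝ | Monotone x} := by
  refine .mk'' isClosed_monotone.nullMeasurableSet ?_ ?_ ?_
  · exact .of_forall fun x => ⟨DomMulAct.mk (Tuple.sort x), Tuple.monotone_sort x⟩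
  · intro g hg
    refine measure_mono_null ?_ (ae_injective_pi (Fin m))
    rintro _ ⟨⟨x, hx, rfl⟩, hgx⟩ hinj
    have hσ : x ∘ (DomMulAct.mk.symm g : Equiv.Perm (Fin m)) = x ∘ (1 : Equiv.Perm (Fin m)) :=
      Tuple.unique_monotone (σ := DomMulAct.mk.symm g) (τ := 1) hgx hx
    have hx_inj : Function.Injective x :=
      (DomMulAct.mk.symm g).injective_comp x |>.1 hinj
    exact hg (DomMulAct.mk.symm.injective
      (Equiv.ext fun i => hx_inj (congrFun hσ i)))
  · exact fun g => (measurePreserving_smul g volume).quasiMeasurePreserving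

lemma setIntegral_monotone_sum_perm {m : ℕ} {F : Type*} [NormedAddCommGroup F] [NormedSpace ℝ F]
    {f : (Fin m → ℝ) → F} (hf : Integrable f) :
    ∫ x in {x : Fin m → ℝ | Monotone x}, ∑ σ : Equiv.Perm (Fin m), f (x ∘ σ) = ∫ x, f x := by
  have : Countable (Equiv.Perm (Fin m))ᵈᵐᵃ := DomMulAct.mk.symm.injective.countable
  rw [(isFundamentalDomain_setOf_monotone m).integral_eq_tsum'' f hf, ← DomMulAct.mk.tsum_eq,
    tsum_fintype, integral_finsetSum]
  · rfl
  · intro σ _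
    exact ((measurePreserving_smul (DomMulAct.mk σ)
      volume).integrable_comp_of_integrable hf).integrableOn

lemma setIntegral_monotone_det_mul_det {𝕜 : Type*} [RCLike 𝕜] {m : ℕ} {f g : Fin m → ℝ → 𝕜}
    (hfg : ∀ i j, Integrable fun z => f j z * g i z) :
    ∫ x in {x : Fin m → ℝ | Monotone x},
        (Matrix.of fun i j => f j (x i)).det * (Matrix.of fun i j => g j (x i)).det =
      (Matrix.of fun i j => ∫ z, f j z * g i z).det := by
  have hdet (x : Fin m → ℝ) : (Matrix.of fun i j => f j (x i) * g i (x i)).det =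
      (∏ i, g i (x i)) * (Matrix.of fun i j => f j (x i)).det := by
    rw [← Matrix.det_mul_column]
    simp only [Matrix.of_apply, mul_comm]
  rw [← integral_det (μ := fun _ => volume) hfg, ← volume_pi,
    ← setIntegral_monotone_sum_perm (integrable_det (μ := fun _ => volume) hfg)]
  congr 1 with x
  rw [Matrix.det_apply' (Matrix.of fun i j => g j (x i)), Finset.mul_sum]
  refine Finset.sum_congr rfl fun σ _ => ?_
  have hperm : (Matrix.of fun i j => f j (x (σ i))).det =
      Equiv.Perm.sign σ * (Matrix.of fun i j => f j (x i)).det :=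
    Matrix.det_permute σ (Matrix.of fun i j => f j (x i))
  simp only [hdet, hperm, Function.comp_apply, Matrix.of_apply]
  ring

end WeylChamber

section ShiftedMoments

open Polynomial

/-- The `j`-th moment `m ↦ ∫ (z + m) ^ j ∂μ` of the translates of `μ` as a polynomial in the
translation `m`, written out through the moments of `μ`. -/
noncomputable def shiftedMomentPoly (μ : Measure ℝ) (j : ℕ) : ℝ[X] :=
  ∑ k ∈ Finset.range (j + 1), C ((∫ z, z ^ (j - k) ∂μ) * j.choose k) * X ^ k

lemma natDegree_shiftedMomentPoly_le (μ : Measure ℝ) (j : ℕ) :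
    (shiftedMomentPoly μ j).natDegree ≤ j :=
  natDegree_sum_le_of_forall_le _ _ fun _ hk =>
    (natDegree_C_mul_X_pow_le _ _).trans (Nat.lt_succ_iff.1 (Finset.mem_range.1 hk))

lemma coeff_shiftedMomentPoly_self (μ : Measure ℝ) [IsProbabilityMeasure μ] (j : ℕ) :
    (shiftedMomentPoly μ j).coeff j = 1 := by
  simp only [shiftedMomentPoly, finsetSum_coeff, coeff_C_mul, coeff_X_pow]
  simp

lemma monic_shiftedMomentPoly (μ : Measure ℝ) [IsProbabilityMeasure μ] (j : ℕ) :
    (shiftedMomentPoly μ j).Monic :=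
  monic_of_natDegree_le_of_coeff_eq_one j (natDegree_shiftedMomentPoly_le μ j)
    (coeff_shiftedMomentPoly_self μ j)

lemma natDegree_shiftedMomentPoly (μ : Measure ℝ) [IsProbabilityMeasure μ] (j : ℕ) :
    (shiftedMomentPoly μ j).natDegree = j :=
  natDegree_eq_of_le_of_coeff_ne_zero (natDegree_shiftedMomentPoly_le μ j)
    (by simp only [coeff_shiftedMomentPoly_self, ne_eq, one_ne_zero, not_false_eq_true])

lemma integral_add_pow {μ : Measure ℝ} (hμ : ∀ k : ℕ, Integrable (fun z => z ^ k) μ)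
    (j : ℕ) (m : ℝ) : ∫ z, (z + m) ^ j ∂μ = (shiftedMomentPoly μ j).eval m := by
  simp_rw [add_comm _ m, add_pow]
  rw [integral_finsetSum _ fun k _ => ((hμ _).const_mul _).mul_const _]
  simp only [integral_mul_const, integral_const_mul, shiftedMomentPoly, eval_finsetSum, eval_mul,
    eval_C, eval_pow, eval_X]
  exact Finset.sum_congr rfl fun k _ => by ring

end ShiftedMoments

section Gauss

open ProbabilityTheory

variable {s t : ℝ}

lemma gauss_nonneg (t y : ℝ) : 0 ≤ gauss t y := by unfold gauss; positivity

lemma gauss_le (ht : 0 ≤ t) (y : ℝ) : gauss t y ≤ (√(2 * π * t))⁻¹ :=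
  mul_le_of_le_one_right (by positivity) <| exp_le_one_iff.2 <|
    div_nonpos_of_nonpos_of_nonneg (neg_nonpos.2 (sq_nonneg y)) (by positivity)

@[fun_prop]
lemma continuous_gauss (t : ℝ) : Continuous (gauss t) := by unfold gauss; fun_prop

@[fun_prop]
lemma continuous_gaussDeriv (t : ℝ) : Continuous (gaussDeriv t) := by unfold gaussDeriv; fun_prop

lemma gauss_sub_eq_gaussianPDFReal (ht : 0 ≤ t) (m x : ℝ) :
    gauss t (x - m) = gaussianPDFReal m t.toNNReal x := by
  rw [gauss, gaussianPDFReal, coe_toNNReal t ht]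

lemma integrable_mul_gauss_sub_iff (ht : 0 < t) {f : ℝ → ℝ} {m : ℝ} :
    Integrable (fun x => f x * gauss t (x - m)) ↔ Integrable f (gaussianReal m t.toNNReal) := by
  rw [gaussianReal_of_var_ne_zero m (toNNReal_pos.2 ht).ne',
    integrable_withDensity_iff_integrable_smul' (measurable_gaussianPDF _ _)
      (.of_forall fun _ => gaussianPDF_lt_top)]
  simp only [toReal_gaussianPDF, smul_eq_mul, gauss_sub_eq_gaussianPDFReal ht.le, mul_comm]

lemma integral_mul_gauss_sub (ht : 0 < t) (f : ℝ → ℝ) (m : ℝ) :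
    ∫ x, f x * gauss t (x - m) = ∫ x, f x ∂gaussianReal m t.toNNReal := by
  rw [integral_gaussianReal_eq_integral_smul (toNNReal_pos.2 ht).ne']
  simp only [smul_eq_mul, gauss_sub_eq_gaussianPDFReal ht.le, mul_comm]

lemma integrable_gauss (ht : 0 < t) : Integrable (gauss t) := by
  simpa using (integrable_mul_gauss_sub_iff ht (m := 0)).2 (integrable_const 1)

lemma integral_gauss (ht : 0 < t) : ∫ y, gauss t y = 1 := by
  simpa using integral_mul_gauss_sub ht 1 0

lemma integrable_pow_gaussianReal (m : ℝ) (v : NNReal) (k : ℕ) :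
    Integrable (fun x => x ^ k) (gaussianReal m v) := by
  have h := (memLp_id_gaussianReal (μ := m) (v := v) k).integrable_norm_pow'
  exact (integrable_norm_iff (by fun_prop)).1 (by simpa only [norm_pow, id] using h)

lemma integral_pow_gaussianReal (m : ℝ) (v : NNReal) (j : ℕ) :
    ∫ x, x ^ j ∂gaussianReal m v = (shiftedMomentPoly (gaussianReal 0 v) j).eval m := by
  rw [← integral_add_pow (integrable_pow_gaussianReal 0 v), ← zero_add m,
    ← gaussianReal_map_add_const, integral_map (by fun_prop) (by fun_prop), zero_add]

-- Completing the square: the left side is the joint density at times `s` and `s + t` of a Brownian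
-- motion, the right side conditions on its value `u` at the later time.
lemma gauss_mul_gauss_sub (hs : 0 < s) (ht : 0 < t) (u x : ℝ) :
    gauss s x * gauss t (u - x) =
      gauss (t + s) u * gauss (s * t / (t + s)) (x - s / (t + s) * u) := by
  have hexp : -x ^ 2 / (2 * s) + -(u - x) ^ 2 / (2 * t) = -u ^ 2 / (2 * (t + s)) +
      -(x - s / (t + s) * u) ^ 2 / (2 * (s * t / (t + s))) := by
    field_simp
    ring
  have hsqrt : √(2 * π * s) * √(2 * π * t) =
      √(2 * π * (t + s)) * √(2 * π * (s * t / (t + s))) := by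
    rw [← sqrt_mul (by positivity), ← sqrt_mul (by positivity)]
    congr 1
    field_simp
  simp only [gauss]
  rw [mul_mul_mul_comm, ← mul_inv, ← exp_add, hexp, hsqrt, exp_add, mul_inv, mul_mul_mul_comm]

lemma exp_mul_sq_mul_gauss (hs : 0 < s) (x : ℝ) :
    exp ((4 * s)⁻¹ * x ^ 2) * gauss s x = √2 * gauss (2 * s) x := by
  have hexp : (4 * s)⁻¹ * x ^ 2 + -x ^ 2 / (2 * s) = -x ^ 2 / (2 * (2 * s)) := by
    field_simp
    ring
  have hsqrt : √(2 * π * (2 * s)) = √2 * √(2 * π * s) := by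
    rw [← sqrt_mul zero_le_two]
    ring_nf
  have h2 : √2 ≠ 0 := by positivity
  rw [gauss, gauss, mul_left_comm, ← exp_add, hexp, hsqrt]
  field_simp

lemma gauss_mul_mul_gauss_sub (hs : 0 < s) (ht : 0 < t) (a u x : ℝ) :
    gauss s x * a * gauss t (u - x) =
      gauss (t + s) u * (a * gauss (s * t / (t + s)) (x - s / (t + s) * u)) := by
  rw [mul_right_comm, gauss_mul_gauss_sub hs ht]
  ring

lemma integrable_gauss_mul_pow_mul_gauss (hs : 0 < s) (ht : 0 < t) (j : ℕ) (u : ℝ) :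
    Integrable fun x => gauss s x * x ^ j * gauss t (u - x) := by
  simp_rw [gauss_mul_mul_gauss_sub hs ht]
  exact ((integrable_mul_gauss_sub_iff (by positivity)).2
    (integrable_pow_gaussianReal _ _ j)).const_mul _

lemma integral_gauss_mul_pow_mul_gauss (hs : 0 < s) (ht : 0 < t) (j : ℕ) (u : ℝ) :
    ∫ x, gauss s x * x ^ j * gauss t (u - x) = gauss (t + s) u *
      (shiftedMomentPoly (gaussianReal 0 (s * t / (t + s)).toNNReal) j).eval (s / (t + s) * u) := by
  simp_rw [gauss_mul_mul_gauss_sub hs ht]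
  rw [integral_const_mul, integral_mul_gauss_sub (by positivity), integral_pow_gaussianReal]

lemma hasDerivAt_gauss (ht : 0 < t) (y : ℝ) : HasDerivAt (gauss t) (gaussDeriv t y) y := by
  have hexponent : HasDerivAt (fun y : ℝ => -y ^ 2 / (2 * t)) (-(2 * y) / (2 * t)) y := by
    simpa using (hasDerivAt_pow 2 y).neg.div_const (2 * t)
  have hsqrt : √(2 * π * t ^ 3) = t * √(2 * π * t) := by
    rw [show 2 * π * t ^ 3 = t ^ 2 * (2 * π * t) by ring, sqrt_mul (by positivity), sqrt_sq ht.le]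
  refine (hexponent.exp.const_mul (√(2 * π * t))⁻¹).congr_deriv ?_
  have hpos : √(2 * π * t) ≠ 0 := by positivity
  rw [gaussDeriv, hsqrt]
  field_simp

lemma abs_gaussDeriv_le (ht : 0 < t) (y : ℝ) : |gaussDeriv t y| ≤ √t / √(2 * π * t ^ 3) := by
  have hamgm : |y| ≤ √t * (y ^ 2 / (2 * t) + 1) := by
    have hsq : √t ^ 2 = t := sq_sqrt ht.le
    have hy : √t * (y ^ 2 / (2 * t) + 1) = (|y| ^ 2 + 2 * √t ^ 2) / (2 * √t) := by
      rw [sq_abs, hsq]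
      nth_rewrite 2 3 [← hsq]
      field_simp
    rw [hy, le_div_iff₀ (by positivity)]
    nlinarith [sq_nonneg (|y| - √t)]
  have hexp : |y| * exp (-y ^ 2 / (2 * t)) ≤ √t := by
    rw [neg_div, exp_neg, ← div_eq_mul_inv, div_le_iff₀ (exp_pos _)]
    exact hamgm.trans (by gcongr; exact add_one_le_exp _)
  rw [gaussDeriv, abs_mul, abs_div, abs_neg, abs_of_nonneg (sqrt_nonneg _), abs_exp,
    div_mul_eq_mul_div]
  gcongr

lemma hasDerivAt_gaussCDF (ht : 0 < t) (y : ℝ) : HasDerivAt (gaussCDF t) (gauss t y) y := by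
  have hint (a : ℝ) : IntegrableOn (gauss t) (Set.Iic a) := (integrable_gauss ht).integrableOn
  have hsplit : gaussCDF t = fun b => gaussCDF t 0 + ∫ z in (0 : ℝ)..b, gauss t z := by
    funext b
    rw [← intervalIntegral.integral_Iic_sub_Iic (hint 0) (hint b), gaussCDF, gaussCDF,
      add_sub_cancel]
  rw [hsplit]
  exact ((continuous_gauss t).integral_hasStrictDerivAt 0 y).hasDerivAt.const_add _

lemma continuous_gaussCDF (ht : 0 < t) : Continuous (gaussCDF t) :=
  continuous_iff_continuousAt.2 fun y => (hasDerivAt_gaussCDF ht y).continuousAt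

lemma gaussCDF_nonneg (t y : ℝ) : 0 ≤ gaussCDF t y :=
  integral_nonneg fun z => gauss_nonneg t z

lemma gaussCDF_le_one (ht : 0 < t) (y : ℝ) : gaussCDF t y ≤ 1 :=
  integral_gauss ht ▸ setIntegral_le_integral (integrable_gauss ht) (.of_forall (gauss_nonneg t))

end Gauss

section Vandermonde

variable {m : ℕ}

lemma vand_eq_det_vandermonde (z : Fin m → ℝ) : vand m z = (Matrix.vandermonde z).det := by
  rw [vand, Matrix.det_vandermonde]
  exact Finset.prod_comm' fun _ _ => by simp only [Finset.mem_univ, Finset.mem_Iio,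
    Finset.mem_Ioi, true_and, and_true]

lemma vand_const_mul (c : ℝ) (z : Fin m → ℝ) :
    vand m (fun i => c * z i) = c ^ m.choose 2 * vand m z := by
  have hchoose : ∑ j : Fin m, (j : ℕ) = m.choose 2 := by
    rw [Fin.sum_univ_eq_sum_range fun j => j, Finset.sum_range_id, Nat.choose_two_right]
  simp only [vand, ← mul_sub, Finset.prod_mul_distrib, Finset.prod_const, Fin.card_Iio,
    Finset.prod_pow_eq_pow_sum, hchoose]

@[fun_prop]
lemma continuous_vand (m : ℕ) : Continuous (vand m) := by unfold vand; fun_prop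

lemma prod_mul_vand (w : ℝ → ℝ) (x : Fin m → ℝ) :
    (∏ i, w (x i)) * vand m x = (Matrix.of fun i j : Fin m => w (x i) * x i ^ (j : ℕ)).det := by
  rw [vand_eq_det_vandermonde, ← Matrix.det_mul_column]
  rfl

end Vandermonde

section GaussChamber

variable {m : ℕ} {s t : ℝ}

lemma det_integral_gauss_mul_pow_mul_gauss (hs : 0 < s) (ht : 0 < t) (u : Fin m → ℝ) :
    (Matrix.of fun i j : Fin m => ∫ z, gauss s z * z ^ (j : ℕ) * gauss t (u i - z)).det =
      (s / (t + s)) ^ m.choose 2 * ((∏ i, gauss (t + s) (u i)) * vand m u) := by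
  simp_rw [integral_gauss_mul_pow_mul_gauss hs ht]
  set p := shiftedMomentPoly (ProbabilityTheory.gaussianReal 0 (s * t / (t + s)).toNNReal)
  rw [← mul_left_comm, ← vand_const_mul, vand_eq_det_vandermonde,
    Matrix.det_eval_matrixOfPolynomials_eq_det_vandermonde _ (fun j : Fin m => p j)
      (fun j => natDegree_shiftedMomentPoly _ j) (fun j => monic_shiftedMomentPoly _ j),
    ← Matrix.det_mul_column]
  rfl

lemma setIntegral_monotone_vand_mul_det_gauss (hs : 0 < s) (ht : 0 < t) (u : Fin m → ℝ) :
    ∫ x in {x : Fin m → ℝ | Monotone x}, (∏ i, gauss s (x i)) * vand m x *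
        (Matrix.of fun i j => gauss t (u j - x i)).det =
      (s / (t + s)) ^ m.choose 2 * ((∏ i, gauss (t + s) (u i)) * vand m u) := by
  simp_rw [prod_mul_vand (gauss s)]
  rw [setIntegral_monotone_det_mul_det (f := fun j z => gauss s z * z ^ (j : ℕ))
      (g := fun i z => gauss t (u i - z))
      fun i j => integrable_gauss_mul_pow_mul_gauss hs ht j (u i),
    det_integral_gauss_mul_pow_mul_gauss hs ht]

lemma integrable_prod_gauss_mul_vand (hs : 0 < s) (m : ℕ) :
    Integrable fun x : Fin m → ℝ => (∏ i, gauss s (x i)) * vand m x := by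
  simp_rw [prod_mul_vand (gauss s)]
  refine integrable_det (f := fun _ (j : Fin m) z => gauss s z * z ^ (j : ℕ)) fun _ j => ?_
  simpa only [mul_comm, sub_zero] using (integrable_mul_gauss_sub_iff hs (m := 0)).2
    (integrable_pow_gaussianReal 0 _ j)

lemma exp_mul_sum_sq_mul_prod_gauss (hs : 0 < s) (x : Fin m → ℝ) :
    exp ((4 * s)⁻¹ * ∑ i, x i ^ 2) * ∏ i, gauss s (x i) = √2 ^ m * ∏ i, gauss (2 * s) (x i) := by
  simp only [Finset.mul_sum, exp_sum, ← Finset.prod_mul_distrib, exp_mul_sq_mul_gauss hs]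
  rw [Finset.prod_mul_distrib, Finset.prod_const, Finset.card_univ, Fintype.card_fin]

lemma rpow_mul_exp_eq_prod_gauss (ht : 0 < t) (x : Fin m → ℝ) :
    t ^ (-(m : ℝ) ^ 2 / 2) * exp (-(∑ i, x i ^ 2) / (2 * t)) =
      √(2 * π) ^ m * (t ^ m.choose 2)⁻¹ * ∏ i, gauss t (x i) := by
  have hexp : exp (-(∑ i, x i ^ 2) / (2 * t)) = ∏ i, exp (-x i ^ 2 / (2 * t)) := by
    rw [← exp_sum, ← Finset.sum_div, Finset.sum_neg_distrib]
  have hpow : t ^ (-(m : ℝ) ^ 2 / 2) = (t ^ m.choose 2)⁻¹ * (√t ^ m)⁻¹ := by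
    rw [← mul_inv, sqrt_eq_rpow, ← rpow_mul_natCast ht.le, ← rpow_natCast t, ← rpow_add ht,
      ← rpow_neg ht.le, Nat.cast_choose_two]
    congr 1
    ring
  have hsqrt : √(2 * π * t) = √(2 * π) * √t := sqrt_mul (by positivity) t
  simp only [gauss, Finset.prod_mul_distrib, Finset.prod_const, Finset.card_univ,
    Fintype.card_fin, hexp, hpow, hsqrt, mul_inv, inv_pow]
  field_simp

end GaussChamber

section Kernel

variable {n : ℕ} {t : ℝ}

lemma setIntegral_Icc_comp_sub_left {F f : ℝ → ℝ} (hF : ∀ x, HasDerivAt F (f x) x)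
    (hf : Continuous f) {a b : ℝ} (hab : a ≤ b) (u : ℝ) :
    ∫ y in Set.Icc a b, f (u - y) = F (u - a) - F (u - b) := by
  rw [integral_Icc_eq_integral_Ioc, ← intervalIntegral.integral_of_le hab,
    intervalIntegral.integral_comp_sub_left,
    intervalIntegral.integral_eq_sub_of_hasDerivAt (fun x _ => hF x) (hf.intervalIntegrable _ _)]

lemma continuous_qKer (ht : 0 < t) (x' : Fin (n + 1) → ℝ) (y' : Fin n → ℝ) :
    Continuous fun w : (Fin (n + 1) → ℝ) × (Fin n → ℝ) => qKer n t w.1 x' w.2 y' := by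
  have := continuous_gaussCDF ht
  unfold qKer
  refine Continuous.matrix_det (continuous_matrix ?_)
  rintro (i | i) (j | j) <;>
    simp only [Matrix.fromBlocks_apply₁₁, Matrix.fromBlocks_apply₁₂, Matrix.fromBlocks_apply₂₁,
      Matrix.fromBlocks_apply₂₂, Matrix.of_apply] <;>
    fun_prop

lemma exists_abs_qKer_le (ht : 0 < t) (x' : Fin (n + 1) → ℝ) (y' : Fin n → ℝ) :
    ∃ K, ∀ x y, |qKer n t x x' y y'| ≤ K := by
  set M := max 1 (max (√(2 * π * t))⁻¹ (√t / √(2 * π * t ^ 3)))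
  have hone : 1 ≤ M := le_max_left _ _
  have hgauss (z : ℝ) : |gauss t z| ≤ M := by
    rw [abs_of_nonneg (gauss_nonneg t z)]
    exact (gauss_le ht.le z).trans ((le_max_left _ _).trans (le_max_right _ _))
  have hderiv (z : ℝ) : |gaussDeriv t z| ≤ M :=
    (abs_gaussDeriv_le ht z).trans ((le_max_right _ _).trans (le_max_right _ _))
  have hCDF (z : ℝ) (P : Prop) [Decidable P] : |gaussCDF t z - if P then 1 else 0| ≤ M := by
    have h0 := gaussCDF_nonneg t z
    have h1 := gaussCDF_le_one ht z
    rw [abs_le]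
    split_ifs <;> constructor <;> linarith
  refine ⟨_, fun x y => Matrix.det_le (abv := AbsoluteValue.abs) (x := M) ?_⟩
  rintro (i | i) (j | j)
  exacts [hgauss _, hCDF _ _, hderiv _, hgauss _]

-- By the fundamental theorem of calculus, integrating row `i` of the lower blocks produces the
-- difference of rows `i` and `i + 1` of the upper blocks, except that the diagonal entry of the
-- indicators `1{j ≥ i}` leaves an identity matrix in the corner.
lemma setIntegral_pi_Icc_qKer (ht : 0 < t) {x : Fin (n + 1) → ℝ} (hx : Monotone x)
    (x' : Fin (n + 1) → ℝ) (y' : Fin n → ℝ) :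
    ∫ y in Set.univ.pi fun i : Fin n => Set.Icc (x i.castSucc) (x i.succ), qKer n t x x' y y' =
      (Matrix.of fun i j => gauss t (x' j - x i)).det := by
  have hle (i : Fin n) : x i.castSucc ≤ x i.succ := hx i.castSucc_le_succ
  have hderiv (i : Fin n) (u : ℝ) := setIntegral_Icc_comp_sub_left (hasDerivAt_gauss ht)
    (continuous_gaussDeriv t) (hle i) u
  have hgauss (i : Fin n) (u : ℝ) := setIntegral_Icc_comp_sub_left (hasDerivAt_gaussCDF ht)
    (continuous_gauss t) (hle i) u
  set A := Matrix.of fun i j => gauss t (x' j - x i)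
  set B := Matrix.of fun (i : Fin (n + 1)) (j : Fin n) =>
    gaussCDF t (y' j - x i) - if (i : ℕ) ≤ (j : ℕ) then (1 : ℝ) else 0
  rw [volume_pi, Measure.restrict_pi_pi]
  unfold qKer
  rw [integral_det_fromBlocks A B (c := fun _ j z => gaussDeriv t (x' j - z))
    (d := fun _ j z => gauss t (y' j - z))
    (fun _ _ => Continuous.integrableOn_Icc (by fun_prop))
    (fun _ _ => Continuous.integrableOn_Icc (by fun_prop))]
  have hC : Matrix.of (fun (i : Fin n) (j : Fin (n + 1)) =>
      ∫ z in Set.Icc (x i.castSucc) (x i.succ), gaussDeriv t (x' j - z)) =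
        consecutiveDiff ℝ n * A := by
    ext i j
    simp only [Matrix.of_apply, hderiv, consecutiveDiff_mul_apply, A]
  have hD : Matrix.of (fun i j : Fin n =>
      ∫ z in Set.Icc (x i.castSucc) (x i.succ), gauss t (y' j - z)) =
        consecutiveDiff ℝ n * B + 1 := by
    ext i j
    simp only [Matrix.of_apply, hgauss, Matrix.add_apply, consecutiveDiff_mul_apply, B,
      Matrix.one_apply, Fin.val_castSucc, Fin.val_succ, Fin.ext_iff]
    split_ifs <;> first | omega | ring
  rw [hC, hD, det_fromBlocks_mul_mul_add, Matrix.det_one, mul_one]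

end Kernel

section Interlacing

variable {n : ℕ}

lemma measurableSet_Wint (n : ℕ) : MeasurableSet (Wint n) := by
  unfold Wint
  measurability

lemma mem_Wint_iff_mem_pi_Icc {x : Fin (n + 1) → ℝ} {y : Fin n → ℝ} :
    (x, y) ∈ Wint n ↔ y ∈ Set.univ.pi fun i => Set.Icc (x i.castSucc) (x i.succ) := by
  simp only [Wint, Set.mem_ofPred_eq, Set.mem_univ_pi, Set.mem_Icc]

lemma sum_sq_le_of_mem_Wint {w : (Fin (n + 1) → ℝ) × (Fin n → ℝ)} (hw : w ∈ Wint n) :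
    ∑ i, w.2 i ^ 2 ≤ 2 * ∑ i, w.1 i ^ 2 := by
  have hsq (i : Fin n) : w.2 i ^ 2 ≤ w.1 i.castSucc ^ 2 + w.1 i.succ ^ 2 := by
    obtain ⟨hl, hr⟩ := hw i
    rcases le_total 0 (w.2 i) with h0 | h0
    · nlinarith [sq_nonneg (w.1 i.castSucc)]
    · nlinarith [sq_nonneg (w.1 i.succ)]
  calc ∑ i, w.2 i ^ 2 ≤ ∑ i : Fin n, w.1 i.castSucc ^ 2 + ∑ i : Fin n, w.1 i.succ ^ 2 := by
        rw [← Finset.sum_add_distrib]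
        exact Finset.sum_le_sum fun i _ => hsq i
    _ ≤ ∑ i, w.1 i ^ 2 + ∑ i, w.1 i ^ 2 := by
        gcongr
        · rw [Fin.sum_univ_castSucc]
          exact le_add_of_nonneg_right (sq_nonneg _)
        · rw [Fin.sum_univ_succ fun i => w.1 i ^ 2]
          exact le_add_of_nonneg_left (sq_nonneg _)
    _ = 2 * ∑ i, w.1 i ^ 2 := (two_mul _).symm

lemma integrable_exp_neg_mul_sum_sq {ι : Type*} [Fintype ι] {b : ℝ} (hb : 0 < b) :
    Integrable fun y : ι → ℝ => exp (-b * ∑ i, y i ^ 2) := by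
  simp_rw [Finset.mul_sum, exp_sum]
  exact Integrable.fintype_prod fun _ => integrable_exp_neg_mul_sq hb

-- On `Wint n` the coordinates of `y` are controlled by those of `x`, so half of the Gaussian room
-- in `x` pays for the integrability in `y`.
lemma integrableOn_Wint_mul {F : (Fin (n + 1) → ℝ) → ℝ}
    {G : (Fin (n + 1) → ℝ) × (Fin n → ℝ) → ℝ} {b K : ℝ} (hb : 0 < b)
    (hF : Integrable fun x => exp (b * ∑ i, x i ^ 2) * F x) (hFm : AEStronglyMeasurable F)
    (hG : AEStronglyMeasurable G) (hK : ∀ w, |G w| ≤ K) :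
    IntegrableOn (fun w => F w.1 * G w) (Wint n) := by
  have hdom := (hF.norm.mul_prod
    (integrable_exp_neg_mul_sum_sq (ι := Fin n) (b := b / 2) (by positivity))).mul_const K
  refine Integrable.mono' (hdom.restrict (s := Wint n)) (hFm.comp_fst.mul hG).restrict ?_
  refine (ae_restrict_iff' (measurableSet_Wint n)).2 (.of_forall fun w hw => ?_)
  have hexp : 1 ≤ exp (b * ∑ i, w.1 i ^ 2) * exp (-(b / 2) * ∑ i, w.2 i ^ 2) := by
    rw [← exp_add, one_le_exp_iff]
    nlinarith [sum_sq_le_of_mem_Wint hw]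
  calc ‖F w.1 * G w‖ = 1 * |F w.1| * |G w| := by simp only [norm_mul, norm_eq_abs, one_mul]
    _ ≤ exp (b * ∑ i, w.1 i ^ 2) * exp (-(b / 2) * ∑ i, w.2 i ^ 2) * |F w.1| * K := by
        gcongr
        exact hK w
    _ = ‖exp (b * ∑ i, w.1 i ^ 2) * F w.1‖ * exp (-(b / 2) * ∑ i, w.2 i ^ 2) * K := by
        rw [norm_mul, norm_eq_abs, norm_eq_abs, abs_exp]
        ring

lemma pi_Icc_eq_empty_of_not_monotone {x : Fin (n + 1) → ℝ} (hx : ¬ Monotone x) :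
    (Set.univ.pi fun i : Fin n => Set.Icc (x i.castSucc) (x i.succ)) = ∅ := by
  obtain ⟨i, hi⟩ := not_forall.1 (mt Fin.monotone_iff_le_succ.2 hx)
  exact Set.univ_pi_eq_empty (Set.Icc_eq_empty hi)

lemma setIntegral_Wint {E : Type*} [NormedAddCommGroup E] [NormedSpace ℝ E]
    {F : (Fin (n + 1) → ℝ) × (Fin n → ℝ) → E} (hF : IntegrableOn F (Wint n)) :
    ∫ w in Wint n, F w = ∫ x in {x : Fin (n + 1) → ℝ | Monotone x},
      ∫ y in Set.univ.pi fun i : Fin n => Set.Icc (x i.castSucc) (x i.succ), F (x, y) := by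
  classical
  have hsection (x : Fin (n + 1) → ℝ) : ∫ y, (Wint n).indicator F (x, y) =
      ∫ y in Set.univ.pi fun i : Fin n => Set.Icc (x i.castSucc) (x i.succ), F (x, y) := by
    rw [← integral_indicator (MeasurableSet.univ_pi fun i => measurableSet_Icc)]
    simp only [Set.indicator_apply, mem_Wint_iff_mem_pi_Icc]
  rw [← integral_indicator (measurableSet_Wint n), Measure.volume_eq_prod,
    integral_prod _ ((integrable_indicator_iff (measurableSet_Wint n)).2 hF)]
  simp_rw [hsection]
  refine (setIntegral_eq_integral_of_forall_compl_eq_zero fun x hx => ?_).symm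
  rw [pi_Icc_eq_empty_of_not_monotone hx, setIntegral_empty]

end Interlacing

section EntranceLaw

variable {n : ℕ} {s t : ℝ}

lemma integrableOn_Wint_vand_mul_qKer (hs : 0 < s) (ht : 0 < t) (x' : Fin (n + 1) → ℝ)
    (y' : Fin n → ℝ) :
    IntegrableOn (fun w => (∏ i, gauss s (w.1 i)) * vand (n + 1) w.1 * qKer n t w.1 x' w.2 y')
      (Wint n) := by
  obtain ⟨K, hK⟩ := exists_abs_qKer_le ht x' y'
  refine integrableOn_Wint_mul (F := fun x => (∏ i, gauss s (x i)) * vand (n + 1) x)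
    (b := (4 * s)⁻¹) (by positivity) ?_ (Continuous.aestronglyMeasurable (by fun_prop))
    (continuous_qKer ht x' y').aestronglyMeasurable fun w => hK w.1 w.2
  simp_rw [← mul_assoc, exp_mul_sum_sq_mul_prod_gauss hs, mul_assoc]
  exact (integrable_prod_gauss_mul_vand (by positivity) (n + 1)).const_mul _

lemma setIntegral_Wint_vand_mul_qKer (hs : 0 < s) (ht : 0 < t) (x' : Fin (n + 1) → ℝ)
    (y' : Fin n → ℝ) :
    ∫ w in Wint n, (∏ i, gauss s (w.1 i)) * vand (n + 1) w.1 * qKer n t w.1 x' w.2 y' =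
      (s / (t + s)) ^ (n + 1).choose 2 *
        ((∏ i, gauss (t + s) (x' i)) * vand (n + 1) x') := by
  rw [setIntegral_Wint (integrableOn_Wint_vand_mul_qKer hs ht x' y'),
    ← setIntegral_monotone_vand_mul_det_gauss hs ht]
  refine setIntegral_congr_fun isClosed_monotone.measurableSet fun x hx => ?_
  rw [← setIntegral_pi_Icc_qKer ht hx, ← integral_const_mul]

end EntranceLaw

theorem stmt9_general (n : ℕ) {s t : ℝ} (hs : 0 < s) (ht : 0 < t)
    (x' : Fin (n + 1) → ℝ) (y' : Fin n → ℝ) :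
    ∫ w in Wint n,
        ((Nat.factorial n : ℝ) / Zconst (n + 1)) * s ^ (-(((n : ℝ) + 1) ^ 2) / 2)
          * Real.exp (-(∑ i, (w.1 i) ^ 2) / (2 * s)) * vand (n + 1) w.1 * vand n y'
          * qKer n t w.1 x' w.2 y'
      = nuLaw n (t + s) x' y' := by
  have hdensity {r : ℝ} (hr : 0 < r) (x : Fin (n + 1) → ℝ) :
      r ^ (-(((n : ℝ) + 1) ^ 2) / 2) * exp (-(∑ i, x i ^ 2) / (2 * r)) =
        √(2 * π) ^ (n + 1) * (r ^ (n + 1).choose 2)⁻¹ * ∏ i, gauss r (x i) := by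
    exact_mod_cast rpow_mul_exp_eq_prod_gauss hr x
  set c := (n.factorial : ℝ) / Zconst (n + 1) * √(2 * π) ^ (n + 1) * vand n y'
  calc _ = ∫ w in Wint n, c * (s ^ (n + 1).choose 2)⁻¹ *
        ((∏ i, gauss s (w.1 i)) * vand (n + 1) w.1 * qKer n t w.1 x' w.2 y') := by
        congr 1 with w
        rw [mul_assoc (_ / _), hdensity hs]
        ring
    _ = c * ((t + s) ^ (n + 1).choose 2)⁻¹ *
        ((∏ i, gauss (t + s) (x' i)) * vand (n + 1) x') := by
        rw [integral_const_mul, setIntegral_Wint_vand_mul_qKer hs ht, div_pow]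
        field_simp
    _ = nuLaw n (t + s) x' y' := by
        rw [nuLaw, mul_assoc (_ / _), hdensity (add_pos ht hs)]
        ring

/-- `(ν^n_t)_{t>0}` is an entrance law for the kernel `q^{n,+}_t`:
`∫_{W^{n+1,n}} ν^n_s(x,y) (h_n(y')/h_n(y)) q^n_t((x,y),(x',y')) dx dy = ν^n_{t+s}(x',y')`,
written in the division-free form where `ν^n_s(x,y) (h_n(y')/h_n(y))`
is replaced by `(n!/Z_{n+1}) s^{−(n+1)²/2} exp(−Σ_i x_i²/(2s)) h_{n+1}(x) h_n(y')`. -/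
theorem stmt9 (n : ℕ) (hn : 1 ≤ n) (s t : ℝ) (hs : 0 < s) (ht : 0 < t)
    (x' : Fin (n + 1) → ℝ) (y' : Fin n → ℝ) (hw' : (x', y') ∈ Wint n) :
    ∫ w in Wint n,
        ((Nat.factorial n : ℝ) / Zconst (n + 1)) * s ^ (-(((n : ℝ) + 1) ^ 2) / 2)
          * Real.exp (-(∑ i, (w.1 i) ^ 2) / (2 * s)) * vand (n + 1) w.1 * vand n y'
          * qKer n t w.1 x' w.2 y'
      = nuLaw n (t + s) x' y' :=
  stmt9_general n hs ht x' y'
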